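/- arXiv:0811.3595 — 2 statements merged into one kernel-verified Lean document; each statement's English description precedes it below -/
import Mathlib

section
/- (First-order asymptotics of the Weingarten function) For every σ ∈ S_n, the limit as the integer d → ∞ of d^{2n − cycles(σ)} · ∫_{U(d)} ∏_{i=1}^n u_{ii} · conj(u_{i σ(i)}) dU exists and equals (−1)^{n − cycles(σ)} · ∏_{c} Cat_{|c|−1}, where the product runs over the orbits c of σ on {1,…,n}. -/
open MeasureTheory

/-- The number of orbits of a permutation (cycles, counting fixed points). -/
def cycles {n : ℕ} (σ : Equiv.Perm (Fin n)) : ℕ :=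
  σ.cycleType.card + (Finset.univ.filter fun x => σ x = x).card

/-- The set of orbits of a permutation `σ` on `{1,…,n}` (as a finset of finsets:
each orbit is the set of points in the same cycle of a given point). -/
def orbitsOf {n : ℕ} (σ : Equiv.Perm (Fin n)) : Finset (Finset (Fin n)) :=
  Finset.univ.image fun x : Fin n => Finset.univ.filter fun y => σ.SameCycle x y

/-- The Borel σ-algebra on the unitary group `U(d)`. -/
noncomputable instance (d : ℕ) : MeasurableSpace (Matrix.unitaryGroup (Fin d) ℂ) :=
  borel _

/-!
Left invariance of Haar measure kills the integral of every Lie derivative `d/dt f(exp(tX) U)` with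
`X` skew-Hermitian. Hermitian matrices span all matrices over `ℂ`, so the resulting identity for the
moments of the entries extends to matrix units; summed against the unitarity relation
`∑ q, u_{qa} conj u_{qb} = δ_{ab}`, it becomes the orthogonality relation
`d · W(S, σ) = [σ a = a] W(S \ {a}, σ) - ∑_{l ∈ S \ {a}} W(S, σ ∘ (a l))`. Multiplication by a
transposition changes the Cayley length by `±1`, so after rescaling only the transpositions that
split the cycle of `a` survive as `d → ∞`. The surviving recursion is, up to signs, Catalan's.
-/

section Combinatorics

open Equiv Equiv.Perm

/-- The weight `(-1)^(k-1) Cat_{k-1}` of a cycle of length `k ≥ 1` in the Möbius function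
`permMoebius`. -/
def signedCatalan (k : ℕ) : ℤ := (-1) ^ (k - 1) * catalan (k - 1)

lemma signedCatalan_add_two (m : ℕ) :
    signedCatalan (m + 2) =
      -∑ j : Fin (m + 1), signedCatalan (j + 1) * signedCatalan (m + 1 - j) := by
  have term (j : Fin (m + 1)) : signedCatalan (j + 1) * signedCatalan (m + 1 - j) =
      (-1) ^ m * (catalan j * catalan (m - j) : ℕ) := by
    have hpow : (-1 : ℤ) ^ (j : ℕ) * (-1) ^ (m - j) = (-1) ^ m := by
      rw [← pow_add, Nat.add_sub_of_le (Nat.lt_succ_iff.1 j.2)]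
    rw [signedCatalan, signedCatalan, Nat.add_sub_cancel, show m + 1 - j - 1 = m - j by omega]
    push_cast
    linear_combination (catalan j * catalan (m - j) : ℤ) * hpow
  simp only [term, ← Finset.mul_sum, ← Nat.cast_sum]
  rw [← catalan_succ, signedCatalan]
  simp [pow_succ]

variable {α : Type*} [DecidableEq α]

lemma formPerm_append_cons (A B : List α) (x : α) :
    (A ++ x :: B).formPerm = (A ++ [x]).formPerm * (x :: B).formPerm := by
  induction A with
  | nil => simp
  | cons a A ih =>
    cases A with
    | nil => simp
    | cons b A =>
      simp only [List.cons_append, List.formPerm_cons_cons] at ih ⊢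
      rw [ih, mul_assoc]

lemma formPerm_cons_concat (a l : α) (A : List α) (h : (a :: A ++ [l]).Nodup) :
    (a :: A ++ [l]).formPerm = swap a l * (a :: A).formPerm := by
  have hrot : (l :: a :: A).rotate 1 = a :: A ++ [l] := by simp
  have hnodup : (l :: a :: A).Nodup := by rwa [← List.nodup_rotate (n := 1), hrot]
  rw [← hrot, List.formPerm_rotate _ hnodup, List.formPerm_cons_cons, swap_comm]

lemma swap_mul_formPerm_append (a l : α) (A B : List α) (h : (a :: A ++ l :: B).Nodup) :
    swap a l * (a :: A ++ l :: B).formPerm = (a :: A).formPerm * (l :: B).formPerm := by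
  have hA : (a :: A ++ [l]).Nodup := h.sublist (by simp)
  rw [formPerm_append_cons, formPerm_cons_concat a l A hA, mul_assoc, swap_mul_self_mul]

lemma formPerm_cons_mul_apply_of_mem_left {a l : α} {A B : List α}
    (h : (a :: A ++ l :: B).Nodup) {ρ : Perm α} (hρ : ∀ x ∈ a :: A ++ l :: B, ρ x = x) :
    ∀ x ∈ a :: A, ((l :: B).formPerm * ρ) x = x := fun x hx ↦ by
  rw [Perm.mul_apply, hρ x (List.mem_append_left _ hx),
    List.formPerm_apply_of_notMem fun hx' ↦ List.disjoint_of_nodup_append h hx hx']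

lemma sameCycle_swap_mul [Finite α] {σ : Perm α} {a l : α} (h : ¬σ.SameCycle a l) :
    (swap a l * σ).SameCycle a l := by
  set τ := swap a l * σ with hτ
  by_contra hτal
  -- As long as the `τ`-orbit of `a` avoids `l`, it never leaves the `σ`-orbit of `a`.
  have hforward (k : ℕ) : σ.SameCycle a ((τ ^ k) a) := by
    induction k with
    | zero => exact SameCycle.refl _ _
    | succ k ih =>
      have hnext : σ.SameCycle a (σ ((τ ^ k) a)) := sameCycle_apply_right.2 ih
      have hne_l : σ ((τ ^ k) a) ≠ l := fun e ↦ h (e ▸ hnext)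
      have hstep : (τ ^ (k + 1)) a = swap a l (σ ((τ ^ k) a)) := by
        rw [pow_succ', Perm.mul_apply, hτ, Perm.mul_apply]
      have hne_a : σ ((τ ^ k) a) ≠ a := fun e ↦
        hτal ⟨(k + 1 : ℕ), by rw [zpow_natCast, hstep, e, swap_apply_left]⟩
      rwa [hstep, swap_apply_of_ne_of_ne hne_a hne_l]
  have hinv : τ.SameCycle a (τ⁻¹ a) := ⟨-1, by rw [zpow_neg_one]⟩
  obtain ⟨k, hk⟩ := hinv.exists_nat_pow_eq
  have hσ : σ (τ⁻¹ a) = l := by simp [hτ]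
  exact h (hσ ▸ sameCycle_apply_right.2 (hk ▸ hforward k))

lemma exists_eq_formPerm_cons_mul [Finite α] (σ : Perm α) (a : α) :
    ∃ (A : List α) (ρ : Perm α), (a :: A).Nodup ∧ σ = (a :: A).formPerm * ρ ∧
      (∀ x ∈ a :: A, ρ x = x) ∧ ∀ x, x ∈ a :: A ↔ σ.SameCycle a x := by
  cases nonempty_fintype α
  by_cases ha : σ a = a
  · refine ⟨[], σ, by simp, by simp, by simpa using ha, fun x ↦ ?_⟩
    rw [List.mem_singleton]
    exact ⟨fun h ↦ h ▸ SameCycle.refl _ _, fun h ↦ (h.eq_of_left ha).symm⟩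
  · have hsupp : a ∈ σ.support := mem_support.2 ha
    obtain ⟨A, hA⟩ : ∃ A, σ.toList a = a :: A := by
      have hhead := toList_getElem_zero σ a hsupp
      cases h : σ.toList a with
      | nil => exact absurd hsupp (toList_eq_nil_iff.1 h)
      | cons b B => exact ⟨B, by simp_all⟩
    have hmem (x : α) : x ∈ a :: A ↔ σ.SameCycle a x := by
      rw [← hA, mem_toList_iff, and_iff_left hsupp]
    refine ⟨A, (σ.cycleOf a)⁻¹ * σ, hA ▸ nodup_toList _ _, ?_, fun x hx ↦ ?_, hmem⟩
    · rw [← hA, formPerm_toList, mul_inv_cancel_left]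
    · rw [Perm.mul_apply, Perm.inv_eq_iff_eq, ((hmem x).1 hx).cycleOf_apply]

variable [Fintype α]

/-- The Cayley length `|σ|`: the least number of transpositions with product `σ`, encoded as the
sum of `k - 1` over the cycle lengths `k`. -/
def cayleyLength (σ : Perm α) : ℕ := (σ.cycleType.map (· - 1)).sum

/-- The Möbius function of the lattice of noncrossing partitions, as a function of the
permutation `σ`: a product of signed Catalan numbers over its cycles. -/
def permMoebius (σ : Perm α) : ℤ := (σ.cycleType.map signedCatalan).prod

lemma cayleyLength_one : cayleyLength (1 : Perm α) = 0 := by simp [cayleyLength]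

lemma permMoebius_one : permMoebius (1 : Perm α) = 1 := by simp [permMoebius]

lemma cycleType_mul_comm (σ τ : Perm α) : (σ * τ).cycleType = (τ * σ).cycleType := by
  rw [← cycleType_conj (σ := τ * σ) (τ := σ)]
  group

lemma cayleyLength_mul_comm (σ τ : Perm α) : cayleyLength (σ * τ) = cayleyLength (τ * σ) := by
  rw [cayleyLength, cayleyLength, cycleType_mul_comm]

lemma permMoebius_mul_comm (σ τ : Perm α) : permMoebius (σ * τ) = permMoebius (τ * σ) := by
  rw [permMoebius, permMoebius, cycleType_mul_comm]

lemma cycleType_formPerm_mul {A : List α} (hA : A.Nodup) (hlen : 2 ≤ A.length) {ρ : Perm α}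
    (hρ : ∀ x ∈ A, ρ x = x) : (A.formPerm * ρ).cycleType = A.length ::ₘ ρ.cycleType := by
  have hdisj : Disjoint A.formPerm ρ := fun x ↦ by
    by_cases hx : x ∈ A
    · exact Or.inr (hρ x hx)
    · exact Or.inl (List.formPerm_apply_of_notMem hx)
  have hcycle : A.formPerm.IsCycle := List.isCycle_formPerm hA hlen
  have hsupp : A.formPerm.support = A.toFinset :=
    List.support_formPerm_of_nodup A hA fun x hx ↦ by simp [hx] at hlen
  rw [hdisj.cycleType_mul, hcycle.cycleType, hsupp, List.toFinset_card_of_nodup hA,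
    Multiset.singleton_add]

lemma cayleyLength_formPerm_cons_mul {a : α} {A : List α} (hA : (a :: A).Nodup) {ρ : Perm α}
    (hρ : ∀ x ∈ a :: A, ρ x = x) :
    cayleyLength ((a :: A).formPerm * ρ) = A.length + cayleyLength ρ := by
  cases A with
  | nil => simp
  | cons b B =>
    rw [cayleyLength, cycleType_formPerm_mul hA (by simp) hρ]
    simp [cayleyLength]

lemma permMoebius_formPerm_cons_mul {a : α} {A : List α} (hA : (a :: A).Nodup) {ρ : Perm α}
    (hρ : ∀ x ∈ a :: A, ρ x = x) :
    permMoebius ((a :: A).formPerm * ρ) = signedCatalan (A.length + 1) * permMoebius ρ := by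
  cases A with
  | nil => simp [signedCatalan]
  | cons b B =>
    rw [permMoebius, cycleType_formPerm_mul hA (by simp) hρ]
    simp [permMoebius]

section Split

variable {a l : α} {A B : List α} (h : (a :: A ++ l :: B).Nodup) {ρ : Perm α}
  (hρ : ∀ x ∈ a :: A ++ l :: B, ρ x = x)

include h hρ

lemma cayleyLength_swap_mul_formPerm_append :
    cayleyLength (swap a l * ((a :: A ++ l :: B).formPerm * ρ)) =
      A.length + (B.length + cayleyLength ρ) := by
  rw [← mul_assoc, swap_mul_formPerm_append a l A B h, mul_assoc,
    cayleyLength_formPerm_cons_mul h.of_append_left (formPerm_cons_mul_apply_of_mem_left h hρ),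
    cayleyLength_formPerm_cons_mul h.of_append_right fun x hx ↦ hρ x (List.mem_append_right _ hx)]

lemma permMoebius_swap_mul_formPerm_append :
    permMoebius (swap a l * ((a :: A ++ l :: B).formPerm * ρ)) =
      signedCatalan (A.length + 1) * (signedCatalan (B.length + 1) * permMoebius ρ) := by
  rw [← mul_assoc, swap_mul_formPerm_append a l A B h, mul_assoc,
    permMoebius_formPerm_cons_mul h.of_append_left (formPerm_cons_mul_apply_of_mem_left h hρ),
    permMoebius_formPerm_cons_mul h.of_append_right fun x hx ↦ hρ x (List.mem_append_right _ hx)]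

end Split

lemma cayleyLength_swap_mul_of_sameCycle {σ : Perm α} {a l : α} (hal : a ≠ l)
    (h : σ.SameCycle a l) : cayleyLength (swap a l * σ) + 1 = cayleyLength σ := by
  obtain ⟨A, ρ, hA, rfl, hρ, hmem⟩ := exists_eq_formPerm_cons_mul σ a
  have hl : l ∈ A := List.mem_of_ne_of_mem hal.symm ((hmem l).2 h)
  obtain ⟨A', B, rfl⟩ := List.append_of_mem hl
  have hsplit := cayleyLength_swap_mul_formPerm_append (A := A') hA hρ
  have hwhole := cayleyLength_formPerm_cons_mul hA hρ
  simp only [List.cons_append, List.length_append, List.length_cons] at hsplit hwhole ⊢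
  omega

lemma cayleyLength_mul_swap_of_sameCycle {σ : Perm α} {a l : α} (hal : a ≠ l)
    (h : σ.SameCycle a l) : cayleyLength (σ * swap a l) + 1 = cayleyLength σ := by
  rw [cayleyLength_mul_comm, cayleyLength_swap_mul_of_sameCycle hal h]

lemma cayleyLength_mul_swap_of_not_sameCycle {σ : Perm α} {a l : α} (h : ¬σ.SameCycle a l) :
    cayleyLength (σ * swap a l) = cayleyLength σ + 1 := by
  have hal : a ≠ l := by rintro rfl; exact h (SameCycle.refl _ _)
  rw [cayleyLength_mul_comm, ← cayleyLength_swap_mul_of_sameCycle hal (sameCycle_swap_mul h),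
    swap_mul_self_mul]

lemma cayleyLength_le_cayleyLength_mul_swap_add_one (σ : Perm α) {a l : α} (hal : a ≠ l) :
    cayleyLength σ ≤ cayleyLength (σ * swap a l) + 1 := by
  by_cases h : σ.SameCycle a l
  · exact (cayleyLength_mul_swap_of_sameCycle hal h).ge
  · have := cayleyLength_mul_swap_of_not_sameCycle h
    omega

lemma permMoebius_formPerm_cons_mul_eq_neg_sum {a : α} {A : List α} (hA : (a :: A).Nodup)
    {ρ : Perm α} (hρ : ∀ x ∈ a :: A, ρ x = x) (hne : A ≠ []) :
    permMoebius ((a :: A).formPerm * ρ) =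
      -∑ l ∈ A.toFinset, permMoebius (swap a l * ((a :: A).formPerm * ρ)) := by
  have term (j : Fin A.length) : permMoebius (swap a A[j.1] * ((a :: A).formPerm * ρ)) =
      signedCatalan (j + 1) * signedCatalan (A.length - j) * permMoebius ρ := by
    have hsplit : a :: A.take j ++ A[j.1] :: A.drop (j + 1) = a :: A := by simp
    have := permMoebius_swap_mul_formPerm_append (hsplit.symm ▸ hA) (hsplit.symm ▸ hρ)
    rw [hsplit, List.length_take, List.length_drop, min_eq_left j.2.le] at this
    rw [this, show A.length - (j + 1) + 1 = A.length - j by omega, mul_assoc]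
  rw [List.sum_toFinset _ hA.of_cons, ← Fin.sum_univ_fun_getElem]
  simp only [term]
  rw [← Finset.sum_mul, permMoebius_formPerm_cons_mul hA hρ]
  obtain ⟨b, B, rfl⟩ := List.exists_cons_of_ne_nil hne
  rw [← neg_mul]
  exact congrArg (· * permMoebius ρ) (signedCatalan_add_two B.length)

lemma permMoebius_eq_sub_sum {σ : Perm α} {S : Finset α} (hS : σ.support ⊆ S) (a : α) :
    permMoebius σ = (if σ a = a then permMoebius σ else 0) -
      ∑ l ∈ S.erase a, if σ.SameCycle a l then permMoebius (σ * swap a l) else 0 := by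
  rw [← Finset.sum_filter]
  split_ifs with hfix
  · rw [Finset.filter_false_of_mem, Finset.sum_empty, sub_zero]
    exact fun l hl h ↦ Finset.ne_of_mem_erase hl (h.eq_of_left hfix).symm
  · obtain ⟨A, ρ, hA, hσ, hρ, hmem⟩ := exists_eq_formPerm_cons_mul σ a
    have hne : A ≠ [] := by
      rintro rfl
      exact hfix (by simpa [hσ] using hρ a)
    have hfilter : {l ∈ S.erase a | σ.SameCycle a l} = A.toFinset := by
      ext l
      rw [Finset.mem_filter, Finset.mem_erase, List.mem_toFinset]
      refine ⟨fun h ↦ List.mem_of_ne_of_mem h.1.1 ((hmem l).2 h.2), fun hl ↦ ?_⟩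
      have hcycle := (hmem l).1 (List.mem_cons_of_mem a hl)
      refine ⟨⟨fun e ↦ hA.notMem (e ▸ hl), hS (mem_support.2 fun e ↦ ?_)⟩, hcycle⟩
      exact hfix (hcycle.apply_eq_self_iff.2 e)
    rw [zero_sub, hfilter, Finset.sum_congr rfl fun l _ ↦ permMoebius_mul_comm σ (swap a l), hσ]
    exact permMoebius_formPerm_cons_mul_eq_neg_sum hA hρ hne

lemma support_mul_swap_subset {σ : Perm α} {S : Finset α} (hσ : σ.support ⊆ S) {a l : α}
    (ha : a ∈ S) (hl : l ∈ S) : (σ * swap a l).support ⊆ S := by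
  refine (support_mul_le σ (swap a l)).trans (Finset.union_subset hσ fun x hx ↦ ?_)
  rcases eq_or_eq_of_swap_apply_ne_self (mem_support.1 hx) with rfl | rfl
  exacts [ha, hl]

/-- The coefficient of `d⁻ᴺ` that the orthogonality relation forces on the Weingarten integral of a
permutation `σ` of `S`, for `N` at most the order `|S| + |σ|` of its leading term. -/
def weingartenCoeff (N : ℕ) (S : Finset α) (σ : Perm α) : ℤ :=
  if N = S.card + cayleyLength σ then permMoebius σ else 0

lemma weingartenCoeff_mul_swap {N : ℕ} {S : Finset α} {σ : Perm α}
    (hN : N + 1 ≤ S.card + cayleyLength σ) {a l : α} (hal : a ≠ l) :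
    weingartenCoeff N S (σ * swap a l) = if N + 1 = S.card + cayleyLength σ then
      (if σ.SameCycle a l then permMoebius (σ * swap a l) else 0) else 0 := by
  by_cases hcycle : σ.SameCycle a l
  · simp only [weingartenCoeff, ← cayleyLength_mul_swap_of_sameCycle hal hcycle, if_pos hcycle,
      ← add_assoc, add_left_inj]
  · have hlen := cayleyLength_mul_swap_of_not_sameCycle hcycle
    rw [weingartenCoeff, if_neg (by omega), if_neg hcycle, ite_self]

lemma weingartenCoeff_succ {N : ℕ} {S : Finset α} {a : α} (ha : a ∈ S) {σ : Perm α}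
    (hσ : σ.support ⊆ S) (hN : N + 1 ≤ S.card + cayleyLength σ) :
    weingartenCoeff (N + 1) S σ = (if σ a = a then weingartenCoeff N (S.erase a) σ else 0) -
      ∑ l ∈ S.erase a, weingartenCoeff N S (σ * swap a l) := by
  have herase : weingartenCoeff N (S.erase a) σ = weingartenCoeff (N + 1) S σ := by
    simp only [weingartenCoeff, ← Finset.card_erase_add_one ha, add_right_comm _ 1, add_left_inj]
  rw [herase, Finset.sum_congr rfl fun l hl ↦
    weingartenCoeff_mul_swap hN (Finset.ne_of_mem_erase hl).symm, weingartenCoeff]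
  by_cases hlead : N + 1 = S.card + cayleyLength σ
  · simp only [if_pos hlead]
    exact permMoebius_eq_sub_sum hσ a
  · simp only [if_neg hlead, ite_self, Finset.sum_const_zero, sub_zero]

lemma permMoebius_eq_neg_one_pow_mul (σ : Perm α) :
    permMoebius σ =
      (-1) ^ cayleyLength σ * (σ.cycleType.map fun k ↦ (catalan (k - 1) : ℤ)).prod := by
  rw [permMoebius, cayleyLength]
  induction σ.cycleType using Multiset.induction with
  | empty => simp
  | cons k s ih =>
    simp only [Multiset.map_cons, Multiset.prod_cons, Multiset.sum_cons, ih, signedCatalan, pow_add]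
    ring

lemma cycles_add_cayleyLength {n : ℕ} (σ : Perm (Fin n)) : cycles σ + cayleyLength σ = n := by
  have hlength : cayleyLength σ + σ.cycleType.card = σ.support.card := by
    have hone : σ.cycleType.card = (σ.cycleType.map fun _ ↦ 1).sum := by simp
    rw [← sum_cycleType, cayleyLength, hone, ← Multiset.sum_map_add]
    refine congrArg _ ((Multiset.map_congr rfl fun k hk ↦ ?_).trans (Multiset.map_id' _))
    exact Nat.sub_add_cancel (one_le_two.trans (two_le_of_mem_cycleType hk))
  have hfixed : (Finset.univ.filter fun x ↦ σ x = x).card + σ.support.card = n := by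
    have := Finset.card_filter_add_card_filter_not (s := Finset.univ) (fun x ↦ σ x = x)
    rwa [Finset.card_univ, Fintype.card_fin] at this
  unfold cycles
  omega

lemma filter_sameCycle_eq_support_cycleOf {σ : Perm α} {x : α} (hx : σ x ≠ x) :
    (Finset.univ.filter fun y ↦ σ.SameCycle x y) = (σ.cycleOf x).support := by
  ext y
  simp [mem_support_cycleOf_iff' hx]

lemma filter_sameCycle_eq_singleton {σ : Perm α} {x : α} (hx : σ x = x) :
    (Finset.univ.filter fun y ↦ σ.SameCycle x y) = {x} := by
  ext y
  simp only [Finset.mem_filter, Finset.mem_univ, true_and, Finset.mem_singleton]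
  exact ⟨fun h ↦ (h.eq_of_left hx).symm, fun h ↦ h ▸ SameCycle.refl _ _⟩

lemma support_injOn_cycleFactorsFinset (σ : Perm α) :
    Set.InjOn support (σ.cycleFactorsFinset : Set (Perm α)) := fun c hc c' hc' h ↦ by
  obtain ⟨x, hx⟩ := (mem_cycleFactorsFinset_iff.1 hc).1.nonempty_support
  rw [cycle_is_cycleOf hx hc, cycle_is_cycleOf (h ▸ hx) hc']

lemma image_support_cycleFactorsFinset_subset_orbitsOf {n : ℕ} (σ : Perm (Fin n)) :
    σ.cycleFactorsFinset.image support ⊆ orbitsOf σ := fun s hs ↦ by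
  obtain ⟨c, hc, rfl⟩ := Finset.mem_image.1 hs
  obtain ⟨x, hx⟩ := (mem_cycleFactorsFinset_iff.1 hc).1.nonempty_support
  have hσx : σ x ≠ x := mem_support.1 (mem_cycleFactorsFinset_support_le hc hx)
  refine Finset.mem_image.2 ⟨x, Finset.mem_univ _, ?_⟩
  rw [filter_sameCycle_eq_support_cycleOf hσx, cycle_is_cycleOf hx hc]

lemma prod_orbitsOf_card {M : Type*} [CommMonoid M] {n : ℕ} (σ : Perm (Fin n)) {f : ℕ → M}
    (hf : f 1 = 1) : ∏ c ∈ orbitsOf σ, f c.card = (σ.cycleType.map f).prod := by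
  have hcycles : (σ.cycleType.map f).prod =
      ∏ s ∈ σ.cycleFactorsFinset.image support, f s.card := by
    rw [cycleType_def, Multiset.map_map, Finset.prod_image (support_injOn_cycleFactorsFinset σ)]
    rfl
  rw [hcycles]
  refine (Finset.prod_subset (image_support_cycleFactorsFinset_subset_orbitsOf σ) ?_).symm
  intro s hs hs'
  obtain ⟨x, -, rfl⟩ := Finset.mem_image.1 hs
  have hfix : σ x = x := by
    by_contra hx
    rw [filter_sameCycle_eq_support_cycleOf hx] at hs'
    exact hs' (Finset.mem_image_of_mem _ (cycleOf_mem_cycleFactorsFinset_iff.2 (mem_support.2 hx)))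
  rw [filter_sameCycle_eq_singleton hfix, Finset.card_singleton, hf]

lemma weingartenCoeff_univ {n : ℕ} (σ : Perm (Fin n)) :
    weingartenCoeff (2 * n - cycles σ) Finset.univ σ =
      (-1) ^ (n - cycles σ) * ∏ c ∈ orbitsOf σ, (catalan (c.card - 1) : ℤ) := by
  have hcycles := cycles_add_cayleyLength σ
  rw [weingartenCoeff, Finset.card_fin, if_pos (by omega), permMoebius_eq_neg_one_pow_mul,
    prod_orbitsOf_card σ (f := fun k ↦ (catalan (k - 1) : ℤ)) (by simp),
    show n - cycles σ = cayleyLength σ by omega]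

end Combinatorics

instance (d : ℕ) : BorelSpace (Matrix.unitaryGroup (Fin d) ℂ) := ⟨rfl⟩

lemma integral_eq_zero_of_hasDerivAt_mul_left {G E : Type*} [Group G] [TopologicalSpace G]
    [ContinuousMul G] [CompactSpace G] [MeasurableSpace G] [BorelSpace G]
    [NormedAddCommGroup E] [NormedSpace ℝ E] {μ : Measure G} [IsFiniteMeasure μ]
    [μ.IsMulLeftInvariant] {f f' : G → E} (hf : Continuous f) (hf' : Continuous f') {γ : ℝ → G}
    (h : ∀ g t, HasDerivAt (fun t ↦ f (γ t * g)) (f' (γ t * g)) t) : ∫ g, f' g ∂μ = 0 := by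
  have hint {F : G → E} (hF : Continuous F) : Integrable F μ :=
    hF.integrable_of_hasCompactSupport (.of_compactSpace F)
  have htrans {F : G → E} (hF : Continuous F) (t : ℝ) : Integrable (fun g ↦ F (γ t * g)) μ :=
    hint (by fun_prop)
  obtain ⟨C, hC⟩ := isCompact_univ.exists_bound_of_continuousOn hf'.continuousOn
  have hderiv := (hasDerivAt_integral_of_dominated_loc_of_deriv_le (μ := μ) (x₀ := (0 : ℝ))
    (F := fun t g ↦ f (γ t * g)) (F' := fun t g ↦ f' (γ t * g)) (bound := fun _ ↦ C)
    Filter.univ_mem (.of_forall fun t ↦ (htrans hf t).aestronglyMeasurable) (htrans hf 0)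
    (htrans hf' 0).aestronglyMeasurable (.of_forall fun g t _ ↦ hC _ (Set.mem_univ _))
    (integrable_const C) (.of_forall fun g t _ ↦ h g t)).2
  simp only [integral_mul_left_eq_self] at hderiv
  exact hderiv.unique (hasDerivAt_const _ _)

lemma integral_sum_sum_const_mul {Ω ι κ : Type*} [MeasurableSpace Ω] {μ : Measure Ω}
    (S : Finset ι) (T : Finset κ) (a : ι → κ → ℂ) {F : ι → κ → Ω → ℂ}
    (hF : ∀ i j, Integrable (F i j) μ) :
    ∫ ω, ∑ i ∈ S, ∑ j ∈ T, a i j * F i j ω ∂μ = ∑ i ∈ S, ∑ j ∈ T, a i j * ∫ ω, F i j ω ∂μ := by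
  rw [integral_finsetSum _ fun i _ ↦ integrable_finsetSum _ fun j _ ↦ (hF i j).const_mul _]
  refine Finset.sum_congr rfl fun i _ ↦ ?_
  rw [integral_finsetSum _ fun j _ ↦ (hF i j).const_mul _]
  simp only [integral_const_mul]

section EntryProd

variable {ι m n : Type*}

/-- The monomial `∏_{i ∈ S} a_{r(i) c(i)}` in the entries of a matrix `A`, with row indices `r` and
column indices `c`. -/
def entryProd (S : Finset ι) (r : ι → m) (c : ι → n) (A : Matrix m n ℂ) : ℂ :=
  ∏ i ∈ S, A (r i) (c i)

@[fun_prop]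
lemma continuous_entryProd (S : Finset ι) (r : ι → m) (c : ι → n) :
    Continuous (entryProd S r c) := by
  unfold entryProd
  fun_prop

lemma entryProd_comp_perm {S : Finset ι} {τ : Equiv.Perm ι} (hτ : {i | τ i ≠ i} ⊆ (S : Set ι))
    (r : ι → m) (c : ι → n) (A : Matrix m n ℂ) :
    entryProd S (r ∘ τ) (c ∘ τ) A = entryProd S r c A :=
  τ.prod_comp S (fun i ↦ A (r i) (c i)) hτ

variable [DecidableEq ι]

lemma entryProd_update {S : Finset ι} {i : ι} (hi : i ∈ S) (r : ι → m) (c : ι → n) (q : m)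
    (A : Matrix m n ℂ) :
    entryProd S (Function.update r i q) c A = A q (c i) * entryProd (S.erase i) r c A := by
  rw [entryProd, ← Finset.mul_prod_erase _ _ hi, Function.update_self, entryProd]
  congr 1
  exact Finset.prod_congr rfl fun j hj ↦ by rw [Function.update_of_ne (Finset.ne_of_mem_erase hj)]

lemma hasDerivAt_entryProd [Fintype m] {A : ℝ → Matrix m n ℂ} {X : Matrix m m ℂ} {t : ℝ}
    (hA : ∀ i j, HasDerivAt (fun t ↦ A t i j) ((X * A t) i j) t) (S : Finset ι) (r : ι → m)
    (c : ι → n) :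
    HasDerivAt (fun t ↦ entryProd S r c (A t))
      (∑ i ∈ S, ∑ q, X (r i) q * entryProd S (Function.update r i q) c (A t)) t := by
  refine (HasDerivAt.fun_finsetProd fun i _ ↦ hA (r i) (c i)).congr_deriv ?_
  refine Finset.sum_congr rfl fun i hi ↦ ?_
  rw [smul_eq_mul, mul_comm, Matrix.mul_apply, Finset.sum_mul]
  exact Finset.sum_congr rfl fun q _ ↦ by rw [entryProd_update hi, entryProd, mul_assoc]

open scoped ComplexConjugate in
lemma hasDerivAt_entryProd_mul_conj {κ : Type*} [DecidableEq κ] [Fintype m]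
    {A : ℝ → Matrix m n ℂ} {H : Matrix m m ℂ} (hH : H.IsHermitian) {t : ℝ}
    (hA : ∀ i j, HasDerivAt (fun t ↦ A t i j) (((Complex.I • H) * A t) i j) t)
    (S : Finset ι) (r : ι → m) (c : ι → n) (T : Finset κ) (r' : κ → m) (c' : κ → n) :
    HasDerivAt (fun t ↦ entryProd S r c (A t) * conj (entryProd T r' c' (A t)))
      (Complex.I * (
        ∑ i ∈ S, ∑ q, H (r i) q *
          (entryProd S (Function.update r i q) c (A t) * conj (entryProd T r' c' (A t))) -
        ∑ i ∈ T, ∑ q, H q (r' i) *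
          (entryProd S r c (A t) * conj (entryProd T (Function.update r' i q) c' (A t))))) t := by
  refine ((hasDerivAt_entryProd hA S r c).fun_mul
    (hasDerivAt_entryProd hA T r' c').star).congr_deriv ?_
  have hconj (i j : m) : star ((Complex.I • H) i j) = -Complex.I * H j i := by
    simp [← hH.apply j i]
  simp only [star_sum, star_mul', hconj]
  simp only [starRingEnd_apply, Matrix.smul_apply, smul_eq_mul, sub_eq_add_neg, mul_add,
    ← Finset.sum_neg_distrib, Finset.sum_mul, Finset.mul_sum]
  congr 1 <;> refine Finset.sum_congr rfl fun i _ ↦ Finset.sum_congr rfl fun q _ ↦ by ring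

end EntryProd

/-- The orthogonality relation of Weingarten calculus in dimension `d`, for a family of integrals
indexed by a set `S` of factors and a permutation `σ`. -/
def OrthogonalityRelation {ι 𝕜 : Type*} [DecidableEq ι] [CommRing 𝕜] (d : 𝕜)
    (W : Finset ι → Equiv.Perm ι → 𝕜) : Prop :=
  ∀ S σ, ∀ a ∈ S, d * W S σ =
    (if σ a = a then W (S.erase a) σ else 0) - ∑ l ∈ S.erase a, W S (σ * Equiv.swap a l)

section UnitaryGroup

open Matrix ComplexConjugate

variable {m : Type*} [Fintype m] [DecidableEq m]

instance : CompactSpace (unitaryGroup m ℂ) := by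
  refine isCompact_iff_compactSpace.1 (IsCompact.of_isClosed_subset
    (isCompact_univ_pi fun _ ↦ isCompact_univ_pi fun _ ↦ isCompact_closedBall (0 : ℂ) 1)
    isClosed_unitary fun U hU i _ j _ ↦ ?_)
  exact mem_closedBall_zero_iff.2 (entry_norm_bound_of_unitary hU i j)

open scoped Matrix.Norms.L2Operator in
lemma exists_forall_hasDerivAt_mul_apply {H : Matrix m m ℂ} (hH : H.IsHermitian) :
    ∃ γ : ℝ → unitaryGroup m ℂ, ∀ (U : unitaryGroup m ℂ) (t : ℝ) (i j : m),
      HasDerivAt (fun t ↦ (γ t * U).1 i j) (((Complex.I • H) * (γ t * U).1) i j) t := by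
  refine ⟨fun t ↦ selfAdjoint.expUnitary (t • ⟨H, hH⟩), fun U t i j ↦ ?_⟩
  have hexp := hasDerivAt_exp_smul_const' (Complex.I • H) t
  simp only [smul_comm _ Complex.I] at hexp
  have hentry := (entryLinearMap ℝ ℂ i j).toContinuousLinearMap.hasFDerivAt.comp_hasDerivAt t
    (hexp.mul_const (U : Matrix m m ℂ))
  simpa [mul_assoc, Function.comp_def] using hentry

variable {ι κ : Type*} [MeasurableSpace (unitaryGroup m ℂ)] (μ : Measure (unitaryGroup m ℂ))

/-- The mixed moment `∫ ∏_{i ∈ S} u_{r(i) c(i)} · conj (∏_{i ∈ T} u_{r'(i) c'(i)}) dμ(U)` of the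
entries of a random unitary matrix. -/
noncomputable def entryMoment (S : Finset ι) (r c : ι → m) (T : Finset κ) (r' c' : κ → m) : ℂ :=
  ∫ U : unitaryGroup m ℂ, entryProd S r c (U : Matrix m m ℂ) *
    conj (entryProd T r' c' (U : Matrix m m ℂ)) ∂μ

/-- The moment `∫ ∏_{i ∈ S} u_{e(i) e(i)} · conj u_{e(i) e(σ i)} dμ(U)`, in which `e` embeds the
points permuted by `σ` into the index set of the matrix. Admitting proper subsets `S` makes the
orthogonality relation a recursion. -/
noncomputable def weingartenIntegral (e : ι → m) (S : Finset ι) (σ : Equiv.Perm ι) : ℂ :=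
  entryMoment μ S e e S e (e ∘ σ)

lemma weingartenIntegral_empty [IsProbabilityMeasure μ] (e : ι → m) (σ : Equiv.Perm ι) :
    weingartenIntegral μ e ∅ σ = 1 := by
  simp [weingartenIntegral, entryMoment, entryProd]

lemma norm_weingartenIntegral_le_one [IsProbabilityMeasure μ] (e : ι → m) (S : Finset ι)
    (σ : Equiv.Perm ι) : ‖weingartenIntegral μ e S σ‖ ≤ 1 := by
  have hentry (r c : ι → m) (U : unitaryGroup m ℂ) :
      ‖entryProd S r c (U : Matrix m m ℂ)‖ ≤ 1 := by
    rw [entryProd, norm_prod]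
    exact Finset.prod_le_one (fun _ _ ↦ norm_nonneg _)
      fun i _ ↦ entry_norm_bound_of_unitary U.2 (r i) (c i)
  refine (norm_integral_le_of_norm_le_const (C := 1) (.of_forall fun U ↦ ?_)).trans (by simp)
  rw [norm_mul, RCLike.norm_conj]
  exact mul_le_one₀ (hentry _ _ U) (norm_nonneg _) (hentry _ _ U)

lemma entryMoment_comp_swap [DecidableEq ι] {S : Finset ι} {a i : ι} (ha : a ∈ S) (hi : i ∈ S)
    (e : ι → m) (σ : Equiv.Perm ι) :
    entryMoment μ S e e S (e ∘ Equiv.swap a i) (e ∘ σ) =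
      weingartenIntegral μ e S (σ * Equiv.swap a i) := by
  have hsupp : {x | Equiv.swap a i x ≠ x} ⊆ (S : Set ι) := fun x hx ↦ by
    rcases Equiv.eq_or_eq_of_swap_apply_ne_self hx with rfl | rfl
    exacts [ha, hi]
  have hσ : e ∘ σ = (e ∘ (σ * Equiv.swap a i)) ∘ Equiv.swap a i := by
    ext x
    simp
  rw [weingartenIntegral, hσ]
  simp only [entryMoment, entryProd_comp_perm hsupp]

variable [BorelSpace (unitaryGroup m ℂ)]

variable (S : Finset ι) (r c : ι → m) (T : Finset κ) (r' c' : κ → m)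

lemma integrable_entryProd_mul_conj [IsFiniteMeasure μ] :
    Integrable (fun U : unitaryGroup m ℂ ↦ entryProd S r c (U : Matrix m m ℂ) *
      conj (entryProd T r' c' (U : Matrix m m ℂ))) μ :=
  Continuous.integrable_of_hasCompactSupport (by fun_prop) (.of_compactSpace _)

variable [DecidableEq ι] [DecidableEq κ]

variable {μ} [IsFiniteMeasure μ] [μ.IsMulLeftInvariant]

lemma sum_mul_entryMoment_update_of_isHermitian {H : Matrix m m ℂ} (hH : H.IsHermitian) :
    ∑ i ∈ S, ∑ q, H (r i) q * entryMoment μ S (Function.update r i q) c T r' c' =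
      ∑ i ∈ T, ∑ q, H q (r' i) * entryMoment μ S r c T (Function.update r' i q) c' := by
  obtain ⟨γ, hγ⟩ := exists_forall_hasDerivAt_mul_apply hH
  have hzero := integral_eq_zero_of_hasDerivAt_mul_left (μ := μ)
    (f := fun U ↦ entryProd S r c U.1 * conj (entryProd T r' c' U.1))
    (f' := fun U ↦ Complex.I * (
      ∑ i ∈ S, ∑ q, H (r i) q *
        (entryProd S (Function.update r i q) c U.1 * conj (entryProd T r' c' U.1)) -
      ∑ i ∈ T, ∑ q, H q (r' i) *
        (entryProd S r c U.1 * conj (entryProd T (Function.update r' i q) c' U.1))))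
    (by fun_prop) (by fun_prop) fun U t ↦
      hasDerivAt_entryProd_mul_conj hH (hγ U t) S r c T r' c'
  have hP (i : ι) (q : m) :=
    integrable_entryProd_mul_conj μ S (Function.update r i q) c T r' c'
  have hQ (i : κ) (q : m) :=
    integrable_entryProd_mul_conj μ S r c T (Function.update r' i q) c'
  rwa [integral_const_mul, mul_eq_zero_iff_left Complex.I_ne_zero, integral_sub
      (integrable_finsetSum _ fun i _ ↦ integrable_finsetSum _ fun q _ ↦ (hP i q).const_mul _)
      (integrable_finsetSum _ fun i _ ↦ integrable_finsetSum _ fun q _ ↦ (hQ i q).const_mul _),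
    sub_eq_zero, integral_sum_sum_const_mul _ _ _ hP, integral_sum_sum_const_mul _ _ _ hQ] at hzero

lemma sum_mul_entryMoment_update (X : Matrix m m ℂ) :
    ∑ i ∈ S, ∑ q, X (r i) q * entryMoment μ S (Function.update r i q) c T r' c' =
      ∑ i ∈ T, ∑ q, X q (r' i) * entryMoment μ S r c T (Function.update r' i q) c' := by
  have hX : X ∈ Submodule.span ℂ (selfAdjoint (Matrix m m ℂ) : Set (Matrix m m ℂ)) :=
    span_selfAdjoint (A := Matrix m m ℂ) ▸ Submodule.mem_top
  induction hX using Submodule.span_induction with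
  | mem H hH => exact sum_mul_entryMoment_update_of_isHermitian S r c T r' c' hH
  | zero => simp
  | add X Y _ _ hX hY => simp only [Matrix.add_apply, add_mul, Finset.sum_add_distrib, hX, hY]
  | smul z X _ hX =>
    simp only [Matrix.smul_apply, smul_eq_mul, mul_assoc, ← Finset.mul_sum, hX]

lemma sum_filter_entryMoment_update (p q : m) :
    ∑ i ∈ S with r i = p, entryMoment μ S (Function.update r i q) c T r' c' =
      ∑ i ∈ T with r' i = q, entryMoment μ S r c T (Function.update r' i p) c' := by
  have h := sum_mul_entryMoment_update (μ := μ) S r c T r' c' (Matrix.single p q 1)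
  simpa [Matrix.single_apply, ite_and, Finset.sum_filter, eq_comm (a := p), eq_comm (a := q)]
    using h

omit [μ.IsMulLeftInvariant] in
lemma sum_entryMoment_update_update {a : ι} (ha : a ∈ S) {b : κ} (hb : b ∈ T) :
    ∑ q, entryMoment μ S (Function.update r a q) c T (Function.update r' b q) c' =
      if c a = c' b then entryMoment μ (S.erase a) r c (T.erase b) r' c' else 0 := by
  have horth (U : unitaryGroup m ℂ) :
      ∑ q, U.1 q (c a) * conj (U.1 q (c' b)) = if c a = c' b then 1 else 0 := by
    have := congrFun (congrFun (mem_unitaryGroup_iff'.1 U.2) (c' b)) (c a)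
    simpa [star_eq_conjTranspose, Matrix.mul_apply, Matrix.one_apply, mul_comm, eq_comm] using this
  have hint (q : m) := integrable_entryProd_mul_conj μ S (Function.update r a q) c T
    (Function.update r' b q) c'
  simp only [entryMoment]
  rw [← integral_finsetSum _ fun q _ ↦ hint q]
  calc
    _ = ∫ U : unitaryGroup m ℂ, (∑ q, U.1 q (c a) * conj (U.1 q (c' b))) *
          (entryProd (S.erase a) r c U.1 * conj (entryProd (T.erase b) r' c' U.1)) ∂μ := by
      refine integral_congr_ae (.of_forall fun U ↦ ?_)
      simp only [entryProd_update ha, entryProd_update hb, Finset.sum_mul, map_mul]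
      exact Finset.sum_congr rfl fun q _ ↦ by ring
    _ = _ := by
      simp only [horth]
      split_ifs <;> simp

lemma orthogonalityRelation_weingartenIntegral {e : ι → m} (he : e.Injective) :
    OrthogonalityRelation (Fintype.card m : ℂ) (weingartenIntegral μ e) := by
  intro S σ a ha
  have hrow (q : m) : entryMoment μ S (Function.update e a q) e S (Function.update e a q) (e ∘ σ) =
      weingartenIntegral μ e S σ +
        ∑ i ∈ S.erase a with e i = q, weingartenIntegral μ e S (σ * Equiv.swap a i) := by
    have hcomm := sum_filter_entryMoment_update (μ := μ) S e e S (Function.update e a q) (e ∘ σ)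
      (e a) q
    have hfilter : {i ∈ S | e i = e a} = {a} := by
      simp only [he.eq_iff, Finset.filter_eq', if_pos ha]
    rw [hfilter, Finset.sum_singleton, Finset.sum_filter, ← Finset.add_sum_erase S _ ha,
      Function.update_self, if_pos rfl, Function.update_idem, Function.update_eq_self] at hcomm
    rw [hcomm, weingartenIntegral, add_right_inj, Finset.sum_filter]
    refine Finset.sum_congr rfl fun i hi ↦ ?_
    rw [Function.update_of_ne (Finset.ne_of_mem_erase hi)]
    split_ifs with h
    · rw [← h, ← Equiv.comp_swap_eq_update, Equiv.swap_comm,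
        entryMoment_comp_swap μ ha (Finset.mem_of_mem_erase hi)]
    · rfl
  have hsum := sum_entryMoment_update_update (μ := μ) S e e S e (e ∘ σ) ha ha
  simp only [hrow, Finset.sum_add_distrib, Finset.sum_const, Finset.card_univ, nsmul_eq_mul,
    Finset.sum_fiberwise, Function.comp_apply, he.eq_iff, eq_comm (a := a)] at hsum
  rw [eq_sub_iff_add_eq, hsum, weingartenIntegral]

end UnitaryGroup

section Asymptotics

open Filter Topology Bornology Equiv Equiv.Perm

variable {ι 𝕜 X : Type*} [DecidableEq ι]

variable [NormedField 𝕜]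

lemma OrthogonalityRelation.norm_mul_le {d : 𝕜} {W : Finset ι → Perm ι → 𝕜}
    (hW : OrthogonalityRelation d W) {C : ℝ} (hC : ∀ S σ, ‖W S σ‖ ≤ C) {S : Finset ι} {a : ι}
    (ha : a ∈ S) (σ : Perm ι) : ‖d * W S σ‖ ≤ S.card * C := by
  have hfix : ‖if σ a = a then W (S.erase a) σ else 0‖ ≤ C := by
    split_ifs
    · exact hC _ _
    · simpa using (norm_nonneg _).trans (hC S σ)
  have hsum : ‖∑ l ∈ S.erase a, W S (σ * swap a l)‖ ≤ (S.erase a).card * C := by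
    simpa using norm_sum_le_of_le _ fun l _ ↦ hC S (σ * swap a l)
  calc ‖d * W S σ‖ ≤ C + (S.erase a).card * C := by
        rw [hW S σ a ha]
        exact norm_sub_le_of_le hfix hsum
    _ = S.card * C := by
        rw [← Finset.card_erase_add_one ha]
        push_cast
        ring

variable {L : Filter X} {d : X → 𝕜} {W : X → Finset ι → Perm ι → 𝕜}

lemma tendsto_zero_of_orthogonalityRelation (hd : Tendsto d L (cobounded 𝕜))
    (hW : ∀ x, OrthogonalityRelation (d x) (W x)) {C : ℝ} (hC : ∀ x S σ, ‖W x S σ‖ ≤ C)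
    {S : Finset ι} (hS : S.Nonempty) (σ : Perm ι) : Tendsto (fun x ↦ W x S σ) L (𝓝 0) := by
  obtain ⟨a, ha⟩ := hS
  have hbdd : IsBoundedUnder (· ≤ ·) L (fun x ↦ ‖d x * W x S σ‖) :=
    isBoundedUnder_of ⟨S.card * C, fun x ↦ (hW x).norm_mul_le (hC x) ha σ⟩
  refine ((tendsto_inv₀_cobounded.comp hd).zero_mul_isBoundedUnder_le hbdd).congr' ?_
  filter_upwards [hd.eventually_ne_cobounded 0] with x hx
  exact inv_mul_cancel_left₀ hx _

variable [Fintype ι]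

theorem tendsto_pow_mul_of_orthogonalityRelation (hd : Tendsto d L (cobounded 𝕜))
    (hW : ∀ x, OrthogonalityRelation (d x) (W x)) (hempty : ∀ x σ, W x ∅ σ = 1)
    {C : ℝ} (hC : ∀ x S σ, ‖W x S σ‖ ≤ C) (N : ℕ) {S : Finset ι} {σ : Perm ι}
    (hσ : σ.support ⊆ S) (hN : N ≤ S.card + cayleyLength σ) :
    Tendsto (fun x ↦ d x ^ N * W x S σ) L (𝓝 (weingartenCoeff N S σ : 𝕜)) := by
  induction N generalizing S σ with
  | zero =>
    obtain rfl | hS := S.eq_empty_or_nonempty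
    · obtain rfl : σ = 1 := support_eq_empty_iff.1 (Finset.subset_empty.1 hσ)
      simpa [weingartenCoeff, cayleyLength_one, permMoebius_one, hempty] using tendsto_const_nhds
    · have hne : 0 ≠ S.card + cayleyLength σ := (Nat.add_pos_left hS.card_pos _).ne
      simpa [weingartenCoeff, hne] using tendsto_zero_of_orthogonalityRelation hd hW hC hS σ
  | succ N ih =>
    obtain ⟨a, ha⟩ : S.Nonempty := by
      rw [Finset.nonempty_iff_ne_empty]
      rintro rfl
      obtain rfl : σ = 1 := support_eq_empty_iff.1 (Finset.subset_empty.1 hσ)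
      simp [cayleyLength_one] at hN
    have hfix : Tendsto (fun x ↦ d x ^ N * if σ a = a then W x (S.erase a) σ else 0) L
        (𝓝 (if σ a = a then (weingartenCoeff N (S.erase a) σ : 𝕜) else 0)) := by
      by_cases hσa : σ a = a
      · have hcard := Finset.card_erase_add_one ha
        simpa only [if_pos hσa] using
          ih (Finset.subset_erase.2 ⟨hσ, notMem_support.2 hσa⟩) (by omega)
      · simpa only [if_neg hσa, mul_zero] using tendsto_const_nhds
    have hswap (l : ι) (hl : l ∈ S.erase a) : Tendsto (fun x ↦ d x ^ N * W x S (σ * swap a l)) L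
        (𝓝 (weingartenCoeff N S (σ * swap a l) : 𝕜)) := by
      have hlen := cayleyLength_le_cayleyLength_mul_swap_add_one σ (Finset.ne_of_mem_erase hl).symm
      exact ih (support_mul_swap_subset hσ ha (Finset.mem_of_mem_erase hl)) (by omega)
    have hrec (x : X) : d x ^ (N + 1) * W x S σ =
        (d x ^ N * if σ a = a then W x (S.erase a) σ else 0) -
          ∑ l ∈ S.erase a, d x ^ N * W x S (σ * swap a l) := by
      rw [pow_succ, mul_assoc, hW x S σ a ha, mul_sub, Finset.mul_sum]
    rw [weingartenCoeff_succ ha hσ hN]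
    push_cast
    simpa only [hrec] using hfix.sub (tendsto_finsetSum _ hswap)

end Asymptotics

/-- First-order asymptotics of the Weingarten function: for every `σ ∈ S_n`, as the
integer `d → ∞` (written `d = n + k`, `k → ∞`, so that `S_n` embeds in `{1,…,d}`),
`d^{2n − cycles(σ)} ∫_{U(d)} ∏ᵢ u_{ii} conj(u_{iσ(i)}) dU` converges to
`(−1)^{n − cycles(σ)} ∏_c Cat_{|c|−1}`, the product over the orbits `c` of `σ`. -/
theorem weingarten_first_order_asymptotics (n : ℕ) (hn : 1 ≤ n) (σ : Equiv.Perm (Fin n))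
    (μ : ∀ d : ℕ, Measure (Matrix.unitaryGroup (Fin d) ℂ))
    (hμ : ∀ d : ℕ, (μ d).IsHaarMeasure) (hprob : ∀ d : ℕ, IsProbabilityMeasure (μ d)) :
    Filter.Tendsto
      (fun k : ℕ =>
        ((n + k : ℕ) : ℂ) ^ (2 * n - cycles σ) *
          ∫ U : Matrix.unitaryGroup (Fin (n + k)) ℂ,
            (∏ i : Fin n,
              (U : Matrix (Fin (n + k)) (Fin (n + k)) ℂ)
                (Fin.castLE (Nat.le_add_right n k) i)
                (Fin.castLE (Nat.le_add_right n k) i)) *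
            starRingEnd ℂ (∏ i : Fin n,
              (U : Matrix (Fin (n + k)) (Fin (n + k)) ℂ)
                (Fin.castLE (Nat.le_add_right n k) i)
                (Fin.castLE (Nat.le_add_right n k) (σ i))) ∂(μ (n + k)))
      Filter.atTop
      (nhds ((-1 : ℂ) ^ (n - cycles σ) * ∏ c ∈ orbitsOf σ, (catalan (c.card - 1) : ℂ))) := by
  have hdim : Filter.Tendsto (fun k : ℕ ↦ ((n + k : ℕ) : ℂ)) Filter.atTop
      (Bornology.cobounded ℂ) :=
    tendsto_natCast_atTop_cobounded.comp (Filter.tendsto_add_atTop_nat n |>.congr (add_comm · n))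
  have hrel (k : ℕ) : OrthogonalityRelation ((n + k : ℕ) : ℂ)
      (weingartenIntegral (μ (n + k)) (Fin.castLE (Nat.le_add_right n k))) := by
    simpa only [Fintype.card_fin] using orthogonalityRelation_weingartenIntegral
      (μ := μ (n + k)) (Fin.castLE_injective (Nat.le_add_right n k))
  have horder : 2 * n - cycles σ ≤ (Finset.univ : Finset (Fin n)).card + cayleyLength σ := by
    have := cycles_add_cayleyLength σ
    rw [Finset.card_fin]
    omega
  have hlim := tendsto_pow_mul_of_orthogonalityRelation hdim hrel
    (fun k ↦ weingartenIntegral_empty _ _) (fun k ↦ norm_weingartenIntegral_le_one _ _) _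
    (Finset.subset_univ _) horder
  rw [weingartenCoeff_univ] at hlim
  exact_mod_cast hlim
end

section
/- (Collins) For every integer d ≥ n, the element Σ_{σ ∈ S_n} Wg_d(σ) σ of the group algebra A, where Wg_d(σ) = ∫_{U(d)} ∏_{i=1}^n u_{ii} · conj(u_{i σ(i)}) dU, is invertible with inverse Σ_{τ ∈ S_n} d^{cycles(τ)} τ; that is, (Σ_{σ ∈ S_n} Wg_d(σ) σ) · (Σ_{τ ∈ S_n} d^{cycles(τ)} τ) = 1 in A. -/
open MeasureTheory

/-!
Let `T` be a matrix on the tensors indexed by `ι → κ` which commutes with `U^{⊗ι}` for every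
unitary `U`. Since a polynomial that vanishes on a torus is zero, `T` commutes with `D^{⊗ι}` for
every diagonal `D`, hence with `H^{⊗ι}` for every Hermitian `H = U D U*`. Along `A + zB` with `A`,
`B` Hermitian, the commutator is a polynomial in `z` vanishing at all real `z`; at `z = i` this
reaches every `X^{⊗ι}`. Given an embedding `e : ι ↪ κ`, the matrices `X` of self-maps of `κ` recover
`T` from its row `e`, and the diagonal `X` kill the entries of this row outside the columns `e ∘ β`,
so `T = ∑ β, T e (e ∘ β) • P_β`, where `P_β` permutes the tensor factors.

The average of the conjugates by `U^{⊗ι}` of the matrix unit at `(e, e ∘ π)` is such a `T`, with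
`T e (e ∘ β) = Wg(π β⁻¹)` and the trace of the matrix unit. As `tr P_β = d^{cycles(β)}`, taking
traces gives `∑ β, Wg(π β⁻¹) d^{cycles(β)} = δ_{π,1}`.
-/

section TensorPower

variable {κ R : Type*} [Fintype κ] [DecidableEq κ] [CommSemiring R]

/-- The tensor power `g^{⊗ι}` of a matrix `g`, acting on the tensors with one index in `κ` for each
element of `ι`. -/
def matrixTensorPower (ι : Type*) [Fintype ι] [DecidableEq ι] :
    Matrix κ κ R →* Matrix (ι → κ) (ι → κ) R where
  toFun g := Matrix.of fun j l => ∏ i, g (j i) (l i)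
  map_one' := by
    ext j l
    simp only [Matrix.of_apply, Matrix.one_apply, Fintype.prod_ite_zero, Finset.prod_const_one,
      funext_iff]
  map_mul' g h := by
    ext j l
    simp only [Matrix.of_apply, Matrix.mul_apply, Fintype.prod_sum, Finset.prod_mul_distrib]

variable {ι : Type*} [Fintype ι] [DecidableEq ι]

lemma matrixTensorPower_apply (g : Matrix κ κ R) (j l : ι → κ) :
    matrixTensorPower ι g j l = ∏ i, g (j i) (l i) :=
  rfl

lemma matrixTensorPower_diagonal (z : κ → R) :
    matrixTensorPower ι (Matrix.diagonal z) = Matrix.diagonal fun j => ∏ i, z (j i) := by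
  ext j l
  simp only [matrixTensorPower_apply, Matrix.diagonal_apply, Fintype.prod_ite_zero, funext_iff]

lemma commute_matrixTensorPower_diagonal_iff {z : κ → R} {T : Matrix (ι → κ) (ι → κ) R} :
    Commute (matrixTensorPower ι (Matrix.diagonal z)) T ↔
      ∀ j l, (∏ i, z (j i)) * T j l = T j l * ∏ i, z (l i) := by
  simp only [Commute, SemiconjBy, matrixTensorPower_diagonal, ← Matrix.ext_iff,
    Matrix.diagonal_mul, Matrix.mul_diagonal]

lemma star_matrixTensorPower [StarRing R] (g : Matrix κ κ R) :
    star (matrixTensorPower ι g) = matrixTensorPower ι (star g) := by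
  ext j l
  simp only [Matrix.star_apply, matrixTensorPower_apply, star_prod]

lemma matrixTensorPower_mem_unitaryGroup {R : Type*} [CommRing R] [StarRing R] {g : Matrix κ κ R}
    (hg : g ∈ Matrix.unitaryGroup κ R) :
    matrixTensorPower ι g ∈ Matrix.unitaryGroup (ι → κ) R := by
  rw [Matrix.mem_unitaryGroup_iff, star_matrixTensorPower, ← map_mul,
    Matrix.mem_unitaryGroup_iff.1 hg, map_one]

lemma continuous_matrixTensorPower [TopologicalSpace R] [ContinuousMul R] :
    Continuous (matrixTensorPower ι : Matrix κ κ R → Matrix (ι → κ) (ι → κ) R) :=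
  continuous_matrix fun j l => continuous_finsetProd _ fun i _ =>
    continuous_id.matrix_elem (j i) (l i)

variable (κ R) in
/-- The action of a permutation `β` of the tensor factors: the permutation matrix of
`j ↦ j ∘ β`. -/
def tensorPermMatrix (β : Equiv.Perm ι) : Matrix (ι → κ) (ι → κ) R :=
  Equiv.Perm.permMatrix R (β.symm.arrowCongr (Equiv.refl κ))

omit [Fintype κ] [DecidableEq ι] in
lemma tensorPermMatrix_apply (β : Equiv.Perm ι) (j l : ι → κ) :
    tensorPermMatrix κ R β j l = if l = j ∘ β then 1 else 0 := by
  simp only [tensorPermMatrix, PEquiv.toMatrix_apply, Equiv.toPEquiv_apply,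
    Option.mem_some_iff, eq_comm]
  rfl

lemma commute_matrixTensorPower_tensorPermMatrix (g : Matrix κ κ R) (β : Equiv.Perm ι) :
    Commute (matrixTensorPower ι g) (tensorPermMatrix κ R β) := by
  rw [Commute, SemiconjBy, tensorPermMatrix, PEquiv.mul_toMatrix_toPEquiv,
    PEquiv.toMatrix_toPEquiv_mul]
  ext j l
  exact Fintype.prod_equiv β.symm _ _ fun i => by
    simp [Equiv.arrowCongr]

end TensorPower

section Commutant

lemma exists_perm_comp_eq_of_range_subset {ι κ : Type*} [Finite ι] (e : ι ↪ κ) {l : ι → κ}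
    (h : Set.range e ⊆ Set.range l) : ∃ β : Equiv.Perm ι, l = e ∘ β := by
  choose g hg using fun i => h ⟨i, rfl⟩
  have hinj : Function.Injective g := fun a b hab => e.injective (by rw [← hg, ← hg, hab])
  let γ := Equiv.ofBijective g (Finite.injective_iff_bijective.1 hinj)
  exact ⟨γ.symm, funext fun i => by simp [← hg, γ, Equiv.ofBijective_apply_symm_apply g]⟩

variable {ι κ : Type*} [Fintype ι] [DecidableEq ι] [Fintype κ] [DecidableEq κ]
  {T : Matrix (ι → κ) (ι → κ) ℂ}

lemma infinite_unitary_complex : (unitary ℂ : Set ℂ).Infinite := by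
  have hsphere : (unitary ℂ : Set ℂ) = Metric.sphere 0 1 := by
    ext z
    rw [SetLike.mem_coe, Unitary.mem_iff_star_mul_self, RCLike.star_def, Complex.conj_mul',
      mem_sphere_zero_iff_norm]
    norm_cast
    exact pow_eq_one_iff_of_nonneg (norm_nonneg z) two_ne_zero
  rw [hsphere]
  refine (isPreconnected_sphere (by simp) 0 1).infinite_of_nontrivial ⟨1, by simp, -1, by simp, ?_⟩
  norm_num

lemma commute_matrixTensorPower_diagonal
    (hT : ∀ U ∈ Matrix.unitaryGroup κ ℂ, Commute (matrixTensorPower ι U) T) (z : κ → ℂ) :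
    Commute (matrixTensorPower ι (Matrix.diagonal z)) T := by
  refine commute_matrixTensorPower_diagonal_iff.2 fun j l => ?_
  have hpoly : (∏ i, MvPolynomial.X (j i)) * MvPolynomial.C (T j l) =
      MvPolynomial.C (T j l) * ∏ i, MvPolynomial.X (l i) := by
    refine MvPolynomial.funext_set _ (fun _ => infinite_unitary_complex) fun w hw => ?_
    have hdiag : Matrix.diagonal w ∈ Matrix.unitaryGroup κ ℂ := by
      rw [Matrix.mem_unitaryGroup_iff, Matrix.star_eq_conjTranspose,
        Matrix.diagonal_conjTranspose, Matrix.diagonal_mul_diagonal, ← Matrix.diagonal_one]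
      exact congrArg Matrix.diagonal (funext fun x => Unitary.mul_star_self_of_mem (hw x trivial))
    simpa using commute_matrixTensorPower_diagonal_iff.1 (hT _ hdiag) j l
  simpa using congrArg (MvPolynomial.eval z) hpoly

lemma commute_matrixTensorPower_of_isHermitian
    (hT : ∀ U ∈ Matrix.unitaryGroup κ ℂ, Commute (matrixTensorPower ι U) T)
    {H : Matrix κ κ ℂ} (hH : H.IsHermitian) : Commute (matrixTensorPower ι H) T := by
  rw [hH.spectral_theorem, Unitary.conjStarAlgAut_apply, map_mul, map_mul]
  exact ((hT _ hH.eigenvectorUnitary.2).mul_left (commute_matrixTensorPower_diagonal hT _)).mul_left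
    (hT _ (star hH.eigenvectorUnitary).2)

lemma exists_polynomial_eval_eq_commutator (T : Matrix (ι → κ) (ι → κ) ℂ) (A B : Matrix κ κ ℂ)
    (j l : ι → κ) : ∃ p : Polynomial ℂ, ∀ z, p.eval z =
      (matrixTensorPower ι (A + z • B) * T - T * matrixTensorPower ι (A + z • B)) j l := by
  let P : Matrix (ι → κ) (ι → κ) (Polynomial ℂ) :=
    matrixTensorPower ι (A.map Polynomial.C + (Polynomial.X : Polynomial ℂ) • B.map Polynomial.C)
  refine ⟨(P * T.map Polynomial.C - T.map Polynomial.C * P) j l, fun z => ?_⟩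
  simp [P, Matrix.mul_apply, matrixTensorPower_apply, Polynomial.eval_finsetSum,
    Polynomial.eval_prod, mul_comm z]

open ComplexStarModule in
lemma commute_matrixTensorPower
    (hT : ∀ U ∈ Matrix.unitaryGroup κ ℂ, Commute (matrixTensorPower ι U) T) (X : Matrix κ κ ℂ) :
    Commute (matrixTensorPower ι X) T := by
  refine sub_eq_zero.1 (Matrix.ext fun j l => ?_)
  obtain ⟨p, hp⟩ := exists_polynomial_eval_eq_commutator T (ℜ X : Matrix κ κ ℂ) (ℑ X) j l
  have hreal (t : ℝ) : p.eval (t : ℂ) = 0 := by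
    have hH : ((ℜ X : Matrix κ κ ℂ) + (t : ℂ) • (ℑ X : Matrix κ κ ℂ)).IsHermitian :=
      (ℜ X).2.add (.smul (Complex.conj_ofReal t) (ℑ X).2)
    rw [hp, (commute_matrixTensorPower_of_isHermitian hT hH).eq, sub_self, Matrix.zero_apply]
  have hzero : p = 0 := p.eq_zero_of_infinite_isRoot <|
    Set.infinite_of_injective_forall_mem Complex.ofReal_injective hreal
  rw [← realPart_add_I_smul_imaginaryPart X, ← hp, hzero, Polynomial.eval_zero, Matrix.zero_apply]

lemma apply_eq_zero_of_forall_ne_comp_perm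
    (hT : ∀ z : κ → ℂ, Commute (matrixTensorPower ι (Matrix.diagonal z)) T) (e : ι ↪ κ) {l : ι → κ}
    (hl : ∀ β : Equiv.Perm ι, l ≠ e ∘ β) : T e l = 0 := by
  classical
  obtain ⟨i, hi⟩ : ∃ i, e i ∉ Set.range l := by
    by_contra! h
    obtain ⟨β, hβ⟩ := exists_perm_comp_eq_of_range_subset e (Set.range_subset_iff.2 h)
    exact hl β hβ
  have h := commute_matrixTensorPower_diagonal_iff.1 (hT (Set.indicator (Set.range l) 1)) e l
  rw [Finset.prod_eq_zero (Finset.mem_univ i) (Set.indicator_of_notMem hi _)] at h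
  simpa using h.symm

lemma eq_zero_of_commute_of_apply_embedding_eq_zero
    (hT : ∀ X : Matrix κ κ ℂ, Commute (matrixTensorPower ι X) T) (e : ι ↪ κ)
    (he : ∀ l, T e l = 0) : T = 0 := by
  ext j l
  let f : κ → κ := Function.extend e j id
  have hf (i : ι) : f (e i) = j i := e.injective.extend_apply j id i
  have h := congrFun (congrFun (hT (Matrix.of fun x y => if f x = y then 1 else 0)).eq e) l
  simpa [Matrix.mul_apply, matrixTensorPower_apply, Fintype.prod_ite_zero, hf, ← funext_iff, he]
    using h

theorem eq_sum_smul_tensorPermMatrix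
    (hT : ∀ U ∈ Matrix.unitaryGroup κ ℂ, Commute (matrixTensorPower ι U) T) (e : ι ↪ κ) :
    T = ∑ β : Equiv.Perm ι, T e (e ∘ β) • tensorPermMatrix κ ℂ β := by
  have hS (X : Matrix κ κ ℂ) : Commute (matrixTensorPower ι X)
      (T - ∑ β : Equiv.Perm ι, T e (e ∘ β) • tensorPermMatrix κ ℂ β) :=
    (commute_matrixTensorPower hT X).sub_right <| Commute.sum_right _ _ _ fun β _ =>
      (commute_matrixTensorPower_tensorPermMatrix X β).smul_right _
  refine sub_eq_zero.1 (eq_zero_of_commute_of_apply_embedding_eq_zero hS e fun l => ?_)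
  by_cases hl : ∃ γ : Equiv.Perm ι, l = e ∘ γ
  · obtain ⟨γ, rfl⟩ := hl
    have hinj (β : Equiv.Perm ι) : e ∘ γ = e ∘ β ↔ γ = β := by
      simp [funext_iff, Equiv.ext_iff]
    simp [Matrix.sum_apply, tensorPermMatrix_apply, hinj]
  · exact apply_eq_zero_of_forall_ne_comp_perm (fun z => hS _) e (not_exists.1 hl)

end Commutant

section Cycles

variable {ι : Type*} [Fintype ι] [DecidableEq ι]

/-- The cycle of `σ` through `x`, as an element of the disjoint union of the set of nontrivial
cycles of `σ` and the set of its fixed points. -/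
def cycleThrough (σ : Equiv.Perm ι) (x : ι) :
    σ.cycleFactorsFinset ⊕ {x // σ x = x} :=
  if h : σ x = x then .inr ⟨x, h⟩
  else .inl ⟨σ.cycleOf x, by
    rwa [Equiv.Perm.cycleOf_mem_cycleFactorsFinset_iff, Equiv.Perm.mem_support]⟩

lemma cycleThrough_eq_iff (σ : Equiv.Perm ι) (x y : ι) :
    cycleThrough σ x = cycleThrough σ y ↔ σ.SameCycle x y := by
  by_cases hx : σ x = x <;> by_cases hy : σ y = y
  · simpa [cycleThrough, hx, hy] using ⟨fun h => h ▸ .refl σ x, fun h => h.eq_of_left hx⟩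
  · simpa [cycleThrough, hx, hy] using fun h => hy (h.apply_eq_self_iff.1 hx)
  · simpa [cycleThrough, hx, hy] using fun h => hx (h.apply_eq_self_iff.2 hy)
  · simpa [cycleThrough, hx, hy] using
      (Equiv.Perm.sameCycle_iff_cycleOf_eq_of_mem_support
        (Equiv.Perm.mem_support.2 hx) (Equiv.Perm.mem_support.2 hy)).symm

lemma cycleThrough_surjective (σ : Equiv.Perm ι) : Function.Surjective (cycleThrough σ) := by
  rintro (⟨c, hc⟩ | ⟨x, hx⟩)
  · obtain ⟨x, hcx, -⟩ := (Equiv.Perm.mem_cycleFactorsFinset_iff.1 hc).1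
    have hx : x ∈ c.support := Equiv.Perm.mem_support.2 hcx
    have hσx := Equiv.Perm.mem_support.1 (Equiv.Perm.mem_cycleFactorsFinset_support_le hc hx)
    exact ⟨x, by simp [cycleThrough, hσx, Equiv.Perm.cycle_is_cycleOf hx hc]⟩
  · exact ⟨x, by simp [cycleThrough, hx]⟩

lemma card_cycleType_add_card_fixed (σ : Equiv.Perm ι) :
    σ.cycleType.card + (Finset.univ.filter fun x => σ x = x).card =
      Nat.card (Quotient (Equiv.Perm.SameCycle.setoid σ)) := by
  have hker : Equiv.Perm.SameCycle.setoid σ = Setoid.ker (cycleThrough σ) :=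
    Setoid.ext fun x y => (cycleThrough_eq_iff σ x y).symm
  rw [hker, Nat.card_congr (Setoid.quotientKerEquivOfSurjective _ (cycleThrough_surjective σ)),
    Nat.card_sum, Equiv.Perm.cycleType_def, Multiset.card_map, Nat.card_eq_fintype_card,
    Nat.card_eq_fintype_card, Fintype.card_coe, Fintype.card_subtype]
  rfl

lemma comp_perm_eq_self_iff {ι α : Type*} [Finite ι] {σ : Equiv.Perm ι} {j : ι → α} :
    j ∘ σ = j ↔ Equiv.Perm.SameCycle.setoid σ ≤ Setoid.ker j := by
  refine ⟨fun hj x y hxy => ?_, fun h => funext fun x => (h ?_).symm⟩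
  · obtain ⟨k, rfl⟩ := hxy.exists_nat_pow_eq
    have hsemi : Function.Semiconj j σ id := congrFun hj
    simpa only [Setoid.ker_def, Function.iterate_id, id, Equiv.Perm.iterate_eq_pow] using
      (hsemi.iterate_right k x).symm
  · exact Equiv.Perm.sameCycle_apply_right.2 (.refl σ x)

lemma trace_tensorPermMatrix (R : Type*) [CommSemiring R] {κ : Type*} [Fintype κ] [DecidableEq κ]
    (β : Equiv.Perm ι) :
    (tensorPermMatrix κ R β).trace =
      (Fintype.card κ : R) ^ Nat.card (Quotient (Equiv.Perm.SameCycle.setoid β)) := by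
  have hfixed : Function.fixedPoints (β.symm.arrowCongr (Equiv.refl κ)) =
      {j | Equiv.Perm.SameCycle.setoid β ≤ Setoid.ker j} :=
    Set.ext fun _ => comp_perm_eq_self_iff
  have hcard : Set.ncard {j : ι → κ | Equiv.Perm.SameCycle.setoid β ≤ Setoid.ker j} =
      Nat.card (Quotient (Equiv.Perm.SameCycle.setoid β) → κ) :=
    Nat.card_congr (Setoid.liftEquiv _)
  rw [tensorPermMatrix, Matrix.trace_permutation, hfixed, hcard, Nat.card_fun,
    Nat.card_eq_fintype_card, Nat.cast_pow]

end Cycles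

section Twirl

open scoped Matrix.Norms.L2Operator

variable {ι κ : Type*} [Fintype ι] [DecidableEq ι] [Fintype κ] [DecidableEq κ]
  [MeasurableSpace (Matrix.unitaryGroup κ ℂ)]

/-- The average of the conjugates of `A` by the tensor powers of the unitary matrices. The
Bochner integral is taken for the L² operator norm, which these conjugations preserve. -/
noncomputable def twirl (μ : Measure (Matrix.unitaryGroup κ ℂ))
    (A : Matrix (ι → κ) (ι → κ) ℂ) : Matrix (ι → κ) (ι → κ) ℂ :=
  ∫ U, matrixTensorPower ι (U : Matrix κ κ ℂ) * A * star (matrixTensorPower ι (U : Matrix κ κ ℂ)) ∂μ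

variable [BorelSpace (Matrix.unitaryGroup κ ℂ)] (μ : Measure (Matrix.unitaryGroup κ ℂ))
  (A : Matrix (ι → κ) (ι → κ) ℂ)

lemma integrable_conj_matrixTensorPower [IsFiniteMeasure μ] :
    Integrable (fun U : Matrix.unitaryGroup κ ℂ =>
      matrixTensorPower ι (U : Matrix κ κ ℂ) * A *
        star (matrixTensorPower ι (U : Matrix κ κ ℂ))) μ := by
  have hcont : Continuous fun U : Matrix.unitaryGroup κ ℂ =>
      matrixTensorPower ι (U : Matrix κ κ ℂ) :=
    continuous_matrixTensorPower.comp continuous_subtype_val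
  refine .of_bound ((hcont.mul continuous_const).mul hcont.star).aestronglyMeasurable ‖A‖
    (.of_forall fun U => ?_)
  have hU := matrixTensorPower_mem_unitaryGroup (ι := ι) U.2
  rw [CStarRing.norm_mul_mem_unitary _ (Unitary.star_mem hU), CStarRing.norm_mem_unitary_mul _ hU]

lemma map_twirl [IsFiniteMeasure μ] (L : Matrix (ι → κ) (ι → κ) ℂ →ₗ[ℂ] ℂ) :
    L (twirl μ A) = ∫ U : Matrix.unitaryGroup κ ℂ, L (matrixTensorPower ι (U : Matrix κ κ ℂ) * A *
      star (matrixTensorPower ι (U : Matrix κ κ ℂ))) ∂μ :=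
  ((LinearMap.toContinuousLinearMap L).integral_comp_comm
    (integrable_conj_matrixTensorPower μ A)).symm

lemma trace_twirl [IsProbabilityMeasure μ] : (twirl μ A).trace = A.trace := by
  have hconj (U : Matrix.unitaryGroup κ ℂ) :
      (matrixTensorPower ι (U : Matrix κ κ ℂ) * A *
        star (matrixTensorPower ι (U : Matrix κ κ ℂ))).trace = A.trace := by
    rw [Matrix.trace_mul_cycle, Matrix.mem_unitaryGroup_iff'.1
      (matrixTensorPower_mem_unitaryGroup U.2), one_mul]
  have h := map_twirl μ A (Matrix.traceLinearMap (ι → κ) ℂ ℂ)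
  simpa only [Matrix.traceLinearMap_apply, hconj, integral_const, probReal_univ, one_smul] using h

lemma twirl_single_apply [IsFiniteMeasure μ] (c c' j j' : ι → κ) :
    twirl μ (Matrix.single c c' 1) j j' = ∫ U : Matrix.unitaryGroup κ ℂ,
      (∏ i, (U : Matrix κ κ ℂ) (j i) (c i)) *
        starRingEnd ℂ (∏ i, (U : Matrix κ κ ℂ) (j' i) (c' i)) ∂μ := by
  refine (map_twirl μ _ (Matrix.entryLinearMap ℂ ℂ j j')).trans (integral_congr_ae ?_)
  refine .of_forall fun U => ?_
  simp [Matrix.mul_apply, Matrix.single_apply, matrixTensorPower_apply, Matrix.star_apply,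
    ite_and, ite_mul]

lemma commute_matrixTensorPower_twirl [μ.IsMulLeftInvariant] [IsFiniteMeasure μ]
    {g : Matrix κ κ ℂ} (hg : g ∈ Matrix.unitaryGroup κ ℂ) :
    Commute (matrixTensorPower ι g) (twirl μ A) := by
  let f (U : Matrix.unitaryGroup κ ℂ) :=
    matrixTensorPower ι (U : Matrix κ κ ℂ) * A * star (matrixTensorPower ι (U : Matrix κ κ ℂ))
  have hf : Integrable f μ := integrable_conj_matrixTensorPower μ A
  let u : Matrix.unitaryGroup κ ℂ := ⟨g, hg⟩
  have htranslate (U : Matrix.unitaryGroup κ ℂ) :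
      matrixTensorPower ι g * f U = f (u * U) * matrixTensorPower ι g := by
    simp only [f, u, Submonoid.coe_mul, map_mul, star_mul, mul_assoc,
      Matrix.mem_unitaryGroup_iff'.1 (matrixTensorPower_mem_unitaryGroup hg), mul_one]
  calc matrixTensorPower ι g * ∫ U, f U ∂μ
      = ∫ U, f (u * U) * matrixTensorPower ι g ∂μ := by
        simp only [← integral_const_mul_of_integrable hf, htranslate]
    _ = (∫ U, f (u * U) ∂μ) * matrixTensorPower ι g :=
        integral_mul_const_of_integrable (hf.comp_mul_left u)
    _ = (∫ U, f U ∂μ) * matrixTensorPower ι g := by rw [integral_mul_left_eq_self]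

lemma sum_twirl_apply_mul_trace [μ.IsMulLeftInvariant] [IsProbabilityMeasure μ] (e : ι ↪ κ) :
    ∑ β : Equiv.Perm ι, twirl μ A e (e ∘ β) * (tensorPermMatrix κ ℂ β).trace = A.trace := by
  have h := eq_sum_smul_tensorPermMatrix
    (fun U hU => commute_matrixTensorPower_twirl μ A hU) e
  rw [← trace_twirl μ A]
  conv_rhs => rw [h]
  simp only [Matrix.trace_sum, Matrix.trace_smul, smul_eq_mul]

end Twirl

section Weingarten

variable {ι κ : Type*} [Fintype ι] [Fintype κ] [DecidableEq κ]
  [MeasurableSpace (Matrix.unitaryGroup κ ℂ)] (μ : Measure (Matrix.unitaryGroup κ ℂ)) (e : ι ↪ κ)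

/-- The Weingarten function `Wg(σ) = ∫ ∏ᵢ u_{ii} conj(u_{iσ(i)}) dU`, where `e` selects the indices
`i` among the rows and columns of `U`. -/
noncomputable def weingarten (σ : Equiv.Perm ι) : ℂ :=
  ∫ U : Matrix.unitaryGroup κ ℂ, (∏ i, (U : Matrix κ κ ℂ) (e i) (e i)) *
    starRingEnd ℂ (∏ i, (U : Matrix κ κ ℂ) (e i) (e (σ i))) ∂μ

variable [DecidableEq ι] [BorelSpace (Matrix.unitaryGroup κ ℂ)]

lemma twirl_single_apply_comp_perm [IsFiniteMeasure μ] (π β : Equiv.Perm ι) :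
    twirl μ (Matrix.single e (e ∘ π) 1) e (e ∘ β) = weingarten μ e (π * β⁻¹) := by
  rw [twirl_single_apply, weingarten]
  refine integral_congr_ae (.of_forall fun U => congrArg₂ _ rfl (congrArg _ ?_))
  exact Fintype.prod_equiv β _ _ fun i => by simp

theorem sum_weingarten_mul_card_pow [μ.IsMulLeftInvariant] [IsProbabilityMeasure μ]
    (π : Equiv.Perm ι) :
    ∑ β : Equiv.Perm ι, weingarten μ e (π * β⁻¹) *
        (Fintype.card κ : ℂ) ^ Nat.card (Quotient (Equiv.Perm.SameCycle.setoid β)) =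
      if π = 1 then 1 else 0 := by
  have htrace : (Matrix.single (e : ι → κ) (e ∘ π) (1 : ℂ)).trace = if π = 1 then 1 else 0 := by
    split_ifs with hπ
    · rw [hπ, Equiv.Perm.coe_one, Function.comp_id, Matrix.trace_single_eq_same]
    · refine Matrix.trace_single_eq_of_ne _ _ _ fun h => hπ (Equiv.ext fun i => ?_)
      exact (e.injective (congrFun h i)).symm
  simpa only [twirl_single_apply_comp_perm, trace_tensorPermMatrix, htrace] using
    sum_twirl_apply_mul_trace μ (Matrix.single (e : ι → κ) (e ∘ π) (1 : ℂ)) e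

end Weingarten

lemma sum_single_mul_sum_single {G R : Type*} [Group G] [Fintype G] [Semiring R] (f g : G → R) :
    (∑ σ, MonoidAlgebra.single σ (f σ)) * ∑ τ, MonoidAlgebra.single τ (g τ) =
      ∑ π, MonoidAlgebra.single π (∑ τ, f (π * τ⁻¹) * g τ) := by
  classical
  ext π
  simp [Finset.mul_sum, MonoidAlgebra.coeff_single, Finsupp.single_apply]

/-- Collins' theorem: for `d ≥ n`, the element `Σ_σ Wg_d(σ) σ` of the group algebra,
where `Wg_d(σ) = ∫_{U(d)} ∏ᵢ u_{ii} conj(u_{iσ(i)}) dU`, is inverse to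
`Σ_τ d^{cycles(τ)} τ`: their product is `1`. -/
theorem weingarten_mul_sum_d_pow_cycles_eq_one (n : ℕ) (hn : 1 ≤ n) (d : ℕ) (hd : n ≤ d)
    (μ : Measure (Matrix.unitaryGroup (Fin d) ℂ)) (hμ : μ.IsHaarMeasure)
    (hprob : IsProbabilityMeasure μ) :
    (∑ σ : Equiv.Perm (Fin n),
        MonoidAlgebra.single σ
          (∫ U : Matrix.unitaryGroup (Fin d) ℂ,
            (∏ i : Fin n,
              (U : Matrix (Fin d) (Fin d) ℂ) (Fin.castLE hd i) (Fin.castLE hd i)) *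
            starRingEnd ℂ (∏ i : Fin n,
              (U : Matrix (Fin d) (Fin d) ℂ) (Fin.castLE hd i) (Fin.castLE hd (σ i))) ∂μ)) *
      (∑ τ : Equiv.Perm (Fin n), MonoidAlgebra.single τ ((d : ℂ) ^ cycles τ)) =
      (1 : MonoidAlgebra ℂ (Equiv.Perm (Fin n))) := by
  have : BorelSpace (Matrix.unitaryGroup (Fin d) ℂ) := ⟨rfl⟩
  have hconv (π : Equiv.Perm (Fin n)) :
      ∑ τ, weingarten μ (Fin.castLEEmb hd) (π * τ⁻¹) * (d : ℂ) ^ cycles τ =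
        if π = 1 then 1 else 0 := by
    simpa only [Fintype.card_fin, ← card_cycleType_add_card_fixed, cycles] using
      sum_weingarten_mul_card_pow μ (Fin.castLEEmb hd) π
  calc _ = ∑ π, MonoidAlgebra.single π
        (∑ τ, weingarten μ (Fin.castLEEmb hd) (π * τ⁻¹) * (d : ℂ) ^ cycles τ) :=
        sum_single_mul_sum_single (weingarten μ (Fin.castLEEmb hd)) _
    _ = 1 := by simp [hconv, MonoidAlgebra.one_def, apply_ite]
end
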